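/- For every integer m ≥ 1, setting γ = (m!)^{1/m} and β = ((m+1)!)^{1/(m+1)}, one has Σ_{i=m+1}^{∞} γ^i/i! < 1 and Σ_{i=m+1}^{∞} β^i/i! > 1. -/

import Mathlib

open Real Finset

/-!
Put `x = γ`, so that `x ^ m = m!`. Consecutive terms of the tail decrease at least by the ratio
`r = x / (m + 2)`, and its first term is `x ^ (m + 1) / (m + 1)! = x / (m + 1)`. Since
`2 ^ m * m! ≤ (m + 1) ^ m`, we have `x ≤ (m + 1) / 2`; hence the first term is at most `1 / 2`,
`r < 1 / 2`, and comparison with a geometric series bounds the tail by `(1 / 2) / (1 - r) < 1`.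
For `β` the first term of the tail is already `1`, and the other terms are positive.
-/

open scoped Nat

theorem two_pow_mul_factorial_le (n : ℕ) : 2 ^ n * n ! ≤ (n + 1) ^ n := by
  induction n with
  | zero => simp
  | succ n ih =>
    calc 2 ^ (n + 1) * (n + 1)!
        = 2 * (n + 1) * (2 ^ n * n !) := by rw [Nat.factorial_succ]; ring
      _ ≤ 2 * (n + 1) * (n + 1) ^ n := by gcongr
      _ = (n + 1) ^ (n + 1) + (n + 1) * (n + 1) ^ n * 1 := by ring
      _ ≤ (n + 1 + 1) ^ (n + 1) :=
        pow_add_mul_le_add_pow (Nat.zero_le _) (Nat.zero_le _) (n + 1)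

theorem two_mul_le_of_pow_le_factorial {x : ℝ} {n : ℕ} (hn : n ≠ 0) (hx : x ^ n ≤ n !) :
    2 * x ≤ n + 1 := by
  refine le_of_pow_le_pow_left₀ hn (by positivity) ?_
  calc (2 * x) ^ n = 2 ^ n * x ^ n := mul_pow ..
    _ ≤ 2 ^ n * n ! := by gcongr
    _ ≤ (n + 1) ^ n := mod_cast two_pow_mul_factorial_le n

theorem summable_pow_add_div_factorial (x : ℝ) (n : ℕ) :
    Summable fun i : ℕ ↦ x ^ (n + i) / (n + i)! :=
  (Real.summable_pow_div_factorial x).comp_injective (add_right_injective n)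

theorem pow_add_div_factorial_le {x : ℝ} (hx : 0 ≤ x) (n i : ℕ) :
    x ^ (n + i) / (n + i)! ≤ x ^ n / n ! * (x / (n + 1)) ^ i := by
  have hfact : (n ! * (n + 1) ^ i : ℝ) ≤ (n + i)! := mod_cast Nat.factorial_mul_pow_le_factorial
  calc x ^ (n + i) / (n + i)! ≤ x ^ (n + i) / (n ! * (n + 1) ^ i) := by gcongr
    _ = x ^ n / n ! * (x / (n + 1)) ^ i := by rw [pow_add, div_pow, mul_div_mul_comm]

theorem tsum_pow_add_div_factorial_le {x : ℝ} {n : ℕ} (hx : 0 ≤ x) (hxn : x < n + 1) :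
    ∑' i : ℕ, x ^ (n + i) / (n + i)! ≤ x ^ n / n ! * (1 - x / (n + 1))⁻¹ := by
  have hr₀ : 0 ≤ x / (n + 1) := by positivity
  have hr₁ : x / (n + 1) < 1 := (div_lt_one (by positivity)).2 hxn
  rw [← tsum_geometric_of_lt_one hr₀ hr₁, ← tsum_mul_left]
  exact (summable_pow_add_div_factorial x n).tsum_le_tsum (pow_add_div_factorial_le hx n)
    ((summable_geometric_of_lt_one hr₀ hr₁).mul_left _)

theorem tsum_pow_add_div_factorial_lt_one {x : ℝ} {n : ℕ} (hx : 0 ≤ x) (hxn : 2 * x ≤ n)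
    (hfirst : x ^ n / n ! ≤ 1 / 2) : ∑' i : ℕ, x ^ (n + i) / (n + i)! < 1 := by
  have hr : x / (n + 1) < 1 / 2 := by
    rw [div_lt_iff₀ (by positivity)]
    linarith
  have hr' : 0 < 1 - x / (n + 1) := by linarith
  calc ∑' i : ℕ, x ^ (n + i) / (n + i)!
      ≤ x ^ n / n ! * (1 - x / (n + 1))⁻¹ := tsum_pow_add_div_factorial_le hx (by linarith)
    _ ≤ 1 / 2 * (1 - x / (n + 1))⁻¹ := by gcongr
    _ < 1 := by
      rw [← div_eq_mul_inv, div_lt_one hr']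
      linarith

theorem tsum_pow_succ_add_div_factorial_lt_one {x : ℝ} {m : ℕ} (hm : m ≠ 0) (hx : 0 ≤ x)
    (hxm : x ^ m ≤ m !) : ∑' i : ℕ, x ^ (m + 1 + i) / (m + 1 + i)! < 1 := by
  have hhalf : 2 * x ≤ m + 1 := two_mul_le_of_pow_le_factorial hm hxm
  refine tsum_pow_add_div_factorial_lt_one hx (mod_cast hhalf) ?_
  calc x ^ (m + 1) / (m + 1)! = x ^ m / m ! * (x / (m + 1)) := by
        rw [pow_succ, Nat.factorial_succ, mul_comm (m + 1), Nat.cast_mul, mul_div_mul_comm,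
          Nat.cast_succ]
    _ ≤ 1 * (1 / 2) := by
      refine mul_le_mul (div_le_one_of_le₀ hxm (by positivity)) ?_ (by positivity) zero_le_one
      rw [div_le_iff₀ (by positivity)]
      linarith
    _ = 1 / 2 := one_mul _

theorem pow_div_factorial_lt_tsum {x : ℝ} (hx : 0 < x) (n : ℕ) :
    x ^ n / n ! < ∑' i : ℕ, x ^ (n + i) / (n + i)! := by
  have hs := summable_pow_add_div_factorial x n
  rw [hs.tsum_eq_zero_add, add_zero, lt_add_iff_pos_right]
  exact ((summable_nat_add_iff 1).2 hs).tsum_pos (fun i ↦ by positivity) 0 (by positivity)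

/-- For every integer `m ≥ 1`, setting `γ = (m!)^{1/m}` and
`β = ((m+1)!)^{1/(m+1)}`, the tail of the exponential series satisfies
`Σ_{i=m+1}^{∞} γ^i/i! < 1` and `Σ_{i=m+1}^{∞} β^i/i! > 1`. -/
theorem tail_lt_one_and_gt_one (m : ℕ) (hm : 1 ≤ m) :
    (∑' i : ℕ, ((Nat.factorial m : ℝ) ^ ((1 : ℝ) / m)) ^ (m + 1 + i) /
        (Nat.factorial (m + 1 + i) : ℝ)) < 1 ∧
    1 < (∑' i : ℕ, ((Nat.factorial (m + 1) : ℝ) ^ ((1 : ℝ) / (m + 1))) ^ (m + 1 + i) /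
        (Nat.factorial (m + 1 + i) : ℝ)) := by
  have hm₀ : m ≠ 0 := Nat.one_le_iff_ne_zero.1 hm
  constructor
  · have hγ : ((m ! : ℝ) ^ ((1 : ℝ) / m)) ^ m = m ! := by
      rw [one_div, rpow_inv_natCast_pow (by positivity) hm₀]
    exact tsum_pow_succ_add_div_factorial_lt_one hm₀ (by positivity) hγ.le
  · have hβ : (((m + 1)! : ℝ) ^ ((1 : ℝ) / (m + 1))) ^ (m + 1) = (m + 1)! := by
      rw [one_div, ← Nat.cast_succ, rpow_inv_natCast_pow (by positivity) m.succ_ne_zero]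
    calc (1 : ℝ) = (((m + 1)! : ℝ) ^ ((1 : ℝ) / (m + 1))) ^ (m + 1) / (m + 1)! := by
          rw [hβ, div_self (by positivity)]
      _ < _ := pow_div_factorial_lt_tsum (by positivity) (m + 1)
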